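/- arXiv:2408.04642 — 3 statements merged into one kernel-verified Lean document; each statement's English description precedes it below -/
import Mathlib

section
/- Let G be a finite simple bipartite graph with bipartition X = {x_1,...,x_n}, Y = {y_1,...,y_n}, and let F_1, F_2 be 1-factors (perfect matchings) of G. Let t be the number of cycles in the spanning subgraph F_1 ∪ F_2 whose length is congruent to 0 modulo 4. Then sgn(F_1)·sgn(F_2) = (−1)^t. -/
open SimpleGraph

/-- A 1-factor (perfect matching) of `G`: a 1-regular spanning subgraph, given as a
simple graph `F ≤ G` in which every vertex has exactly one neighbour. -/
def IsOneFactor {V : Type*} (G F : SimpleGraph V) : Prop :=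
  F ≤ G ∧ ∀ v : V, (F.neighborSet v).ncard = 1

/-!
Walking along an edge of `F₁` from `x_i` and back along an edge of `F₂` leads to `x_{τ i}`, where
`τ = σ₂⁻¹ σ₁`. Hence the components of `F₁ ∪ F₂` correspond to the orbits of `τ`, fixed points
included, and a component has twice as many vertices as its orbit. The cycles of length divisible
by `4` are therefore the orbits of even size, and these are what the sign of `τ` counts, a cycle of
length `k` having sign `-(-1)^k`.
-/

section Perm

open Equiv Equiv.Perm

theorem apply_eq_of_sameCycle {α γ : Type*} {τ : Perm α} {f : α → γ}
    (hf : ∀ x, f (τ x) = f x) {x y : α} (h : τ.SameCycle x y) : f x = f y := by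
  have zpow_invariant (k : ℤ) : ∀ x, f ((τ ^ k) x) = f x := by
    induction k with
    | zero => exact fun _ => rfl
    | succ k ih => intro x; rw [zpow_add_one, Perm.mul_apply, ih, hf]
    | pred k ih =>
      intro x
      rw [zpow_sub_one, Perm.mul_apply, ih, ← hf, ← Perm.mul_apply, mul_inv_cancel, Perm.one_apply]
  obtain ⟨k, rfl⟩ := h
  exact (zpow_invariant k x).symm

variable {α : Type*} [Fintype α] [DecidableEq α] (τ : Perm α)

theorem sign_eq_neg_one_pow_card_even_cycleFactors :
    sign τ = (-1) ^ (τ.cycleFactorsFinset.filter fun c => Even c.support.card).card := by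
  have sign_factor (k : ℕ) : (-(-1) ^ k : ℤˣ) = if Even k then -1 else 1 := by
    split_ifs with hk
    · rw [hk.neg_one_pow]
    · rw [(Nat.not_even_iff_odd.mp hk).neg_one_pow, neg_neg]
  rw [sign_of_cycleType', cycleType_def, Multiset.map_map, ← Finset.prod_const,
    Finset.prod_filter]
  exact Finset.prod_congr rfl fun c _ => sign_factor c.support.card

theorem even_ncard_sameCycle_iff (x : α) :
    Even {y | τ.SameCycle y x}.ncard ↔ x ∈ τ.support ∧ Even (τ.cycleOf x).support.card := by
  by_cases hx : x ∈ τ.support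
  · have orbit_eq : {y | τ.SameCycle y x} = ((τ.cycleOf x).support : Set α) := by
      ext y
      rw [Finset.mem_coe, mem_support_cycleOf_iff, and_iff_left hx]
      exact sameCycle_comm
    rw [orbit_eq, Set.ncard_coe_finset, and_iff_right hx]
  · have orbit_eq : {y | τ.SameCycle y x} = {x} := by
      ext y
      exact ⟨fun h => h.eq_of_right (notMem_support.mp hx), fun h => h ▸ SameCycle.rfl⟩
    simp [orbit_eq, hx]

theorem bijOn_lift_cycleOf :
    Set.BijOn (Quotient.lift τ.cycleOf fun _ _ => SameCycle.cycleOf_eq)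
      {q : Quotient (SameCycle.setoid τ) | Even {x | Quotient.mk _ x = q}.ncard}
      (τ.cycleFactorsFinset.filter fun c => Even c.support.card) := by
  have even_orbit_iff (x : α) :
      Even {y | Quotient.mk (SameCycle.setoid τ) y = Quotient.mk _ x}.ncard ↔
        x ∈ τ.support ∧ Even (τ.cycleOf x).support.card := by
    rw [← even_ncard_sameCycle_iff]
    simp only [Quotient.eq, SameCycle.setoid]
  refine ⟨?mapsTo, ?injOn, ?surjOn⟩
  case mapsTo =>
    rintro ⟨x⟩ hx
    obtain ⟨hx, heven⟩ := (even_orbit_iff x).mp hx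
    exact Finset.mem_filter.mpr ⟨cycleOf_mem_cycleFactorsFinset_iff.mpr hx, heven⟩
  case injOn =>
    rintro ⟨x⟩ hx ⟨y⟩ hy hxy
    exact Quotient.sound <| (sameCycle_iff_cycleOf_eq_of_mem_support
      ((even_orbit_iff x).mp hx).1 ((even_orbit_iff y).mp hy).1).mpr hxy
  case surjOn =>
    intro c hc
    obtain ⟨hc, heven⟩ := Finset.mem_filter.mp hc
    obtain ⟨x, hx⟩ := (mem_cycleFactorsFinset_iff.mp hc).1.nonempty_support
    obtain rfl : c = τ.cycleOf x := cycle_is_cycleOf hx hc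
    exact ⟨Quotient.mk _ x,
      (even_orbit_iff x).mpr ⟨mem_cycleFactorsFinset_support_le hc hx, heven⟩, rfl⟩

theorem sign_eq_neg_one_pow_card_even_orbits :
    sign τ = (-1) ^
      Nat.card {q : Quotient (SameCycle.setoid τ) // Even {x | Quotient.mk _ x = q}.ncard} := by
  rw [sign_eq_neg_one_pow_card_even_cycleFactors, ← Nat.card_eq_finsetCard]
  exact congrArg _ (Nat.card_congr (bijOn_lift_cycleOf τ).equiv).symm

end Perm

theorem apply_eq_of_reachable {V γ : Type*} {G : SimpleGraph V} {f : V → γ}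
    (hf : ∀ ⦃u v⦄, G.Adj u v → f u = f v) {u v : V} (h : G.Reachable u v) : f u = f v := by
  obtain ⟨walk⟩ := h
  induction walk with
  | nil => rfl
  | cons huv _ ih => exact (hf huv).trans ih

section Matching

open Equiv.Perm

variable {α β : Type*}

/-- The perfect matching between the two sides of `α ⊕ β` given by a bijection `σ`, as a graph:
its edges join each `a` to `σ a`. -/
def matchingGraph (σ : α ≃ β) : SimpleGraph (α ⊕ β) :=
  fromEdgeSet (Set.range fun a => s(Sum.inl a, Sum.inr (σ a)))

theorem matchingGraph_adj_inl_inr (σ : α ≃ β) (a : α) :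
    (matchingGraph σ).Adj (Sum.inl a) (Sum.inr (σ a)) := by
  simp [matchingGraph]

theorem matchingGraph_le_iff {σ : α ≃ β} {F : SimpleGraph (α ⊕ β)} :
    matchingGraph σ ≤ F ↔ ∀ a, F.Adj (Sum.inl a) (Sum.inr (σ a)) := by
  refine ⟨fun h a => h (matchingGraph_adj_inl_inr σ a), fun h u v huv => ?_⟩
  obtain ⟨⟨a, ha⟩, -⟩ := (fromEdgeSet_adj _).mp huv
  rw [← mem_edgeSet, ← ha]
  exact h a

theorem exists_matchingGraph_adj (σ : α ≃ β) (u : α ⊕ β) : ∃ v, (matchingGraph σ).Adj u v := by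
  rcases u with a | b
  · exact ⟨_, matchingGraph_adj_inl_inr σ a⟩
  · exact ⟨Sum.inl (σ.symm b), by simpa using (matchingGraph_adj_inl_inr σ (σ.symm b)).symm⟩

theorem IsOneFactor.eq_of_adj {V : Type*} {G F : SimpleGraph V} (hF : IsOneFactor G F)
    {u v w : V} (hv : F.Adj u v) (hw : F.Adj u w) : v = w := by
  obtain ⟨x, hx⟩ := Set.ncard_eq_one.mp (hF.2 u)
  have eq_x {y : V} (hy : F.Adj u y) : y = x := by
    rwa [← mem_neighborSet, hx, Set.mem_singleton_iff] at hy
  exact (eq_x hv).trans (eq_x hw).symm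

theorem IsOneFactor.eq_matchingGraph {G F : SimpleGraph (α ⊕ β)} (hF : IsOneFactor G F)
    {σ : α ≃ β} (hσ : ∀ a, F.Adj (Sum.inl a) (Sum.inr (σ a))) : F = matchingGraph σ := by
  have hle : matchingGraph σ ≤ F := matchingGraph_le_iff.mpr hσ
  refine le_antisymm (fun u v huv => ?_) hle
  obtain ⟨w, huw⟩ := exists_matchingGraph_adj σ u
  rwa [hF.eq_of_adj huv (hle huw)]

/-- The endpoint in `α` of the edge of `matchingGraph σ` through a given vertex. -/
def leftEnd (σ : α ≃ β) : α ⊕ β → α :=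
  Sum.elim id σ.symm

theorem ncard_leftEnd_preimage (σ : α ≃ β) (s : Set α) :
    (leftEnd σ ⁻¹' s).ncard = 2 * s.ncard := by
  let e : α ⊕ β ≃ Bool × α :=
    ((Equiv.refl α).sumCongr σ.symm).trans (Equiv.boolProdEquivSum α).symm
  have preimage_eq : leftEnd σ ⁻¹' s = e ⁻¹' (Set.univ ×ˢ s) := by
    ext (a | b) <;> simp [e, leftEnd]
  rw [preimage_eq, Set.ncard_preimage_of_injective_subset_range e.injective (by simp),
    Set.ncard_prod, Set.ncard_univ, Nat.card_eq_fintype_card, Fintype.card_bool]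

variable (σ₁ σ₂ : α ≃ β)

theorem sameCycle_leftEnd_of_adj {u v : α ⊕ β}
    (h : (matchingGraph σ₁ ⊔ matchingGraph σ₂).Adj u v) :
    SameCycle (σ₁.trans σ₂.symm) (leftEnd σ₁ u) (leftEnd σ₁ v) := by
  have first_edge (a : α) :
      SameCycle (σ₁.trans σ₂.symm) (leftEnd σ₁ (Sum.inl a)) (leftEnd σ₁ (Sum.inr (σ₁ a))) := by
    simp [leftEnd, SameCycle.refl]
  have second_edge (a : α) :
      SameCycle (σ₁.trans σ₂.symm) (leftEnd σ₁ (Sum.inl a)) (leftEnd σ₁ (Sum.inr (σ₂ a))) :=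
    sameCycle_symm_apply_right.mpr SameCycle.rfl
  rcases h with h | h <;> obtain ⟨⟨a, ha⟩, -⟩ := (fromEdgeSet_adj _).mp h <;>
    obtain ⟨rfl, rfl⟩ | ⟨rfl, rfl⟩ := Sym2.eq_iff.mp ha
  exacts [first_edge a, (first_edge a).symm, second_edge a, (second_edge a).symm]

theorem connectedComponentMk_inl_trans_symm (a : α) :
    (matchingGraph σ₁ ⊔ matchingGraph σ₂).connectedComponentMk
        (Sum.inl ((σ₁.trans σ₂.symm) a)) =
      (matchingGraph σ₁ ⊔ matchingGraph σ₂).connectedComponentMk (Sum.inl a) := by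
  have along_first := matchingGraph_adj_inl_inr σ₁ a
  have along_second := matchingGraph_adj_inl_inr σ₂ ((σ₁.trans σ₂.symm) a)
  rw [Equiv.trans_apply, Equiv.apply_symm_apply] at along_second
  exact ConnectedComponent.sound <|
    (Adj.reachable (Or.inr along_second)).trans (Adj.reachable (Or.inl along_first.symm))

/-- The components of the union of two perfect matchings of `α ⊕ β` correspond to the orbits on
`α` of the permutation that follows the first matching and returns along the second. -/
def componentEquivOrbit :
    (matchingGraph σ₁ ⊔ matchingGraph σ₂).ConnectedComponent ≃
      Quotient (SameCycle.setoid (σ₁.trans σ₂.symm)) where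
  toFun := Quot.lift (fun u => Quotient.mk _ (leftEnd σ₁ u)) fun _ _ =>
    apply_eq_of_reachable fun _ _ h => Quotient.sound (sameCycle_leftEnd_of_adj σ₁ σ₂ h)
  invFun := Quotient.lift (fun a => connectedComponentMk _ (Sum.inl a)) fun _ _ h =>
    apply_eq_of_sameCycle (f := fun a => connectedComponentMk _ (Sum.inl a))
      (connectedComponentMk_inl_trans_symm σ₁ σ₂) h
  left_inv := by
    rintro ⟨a | b⟩
    · rfl
    · have h := matchingGraph_adj_inl_inr σ₁ (σ₁.symm b)
      rw [Equiv.apply_symm_apply] at h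
      exact ConnectedComponent.sound (Adj.reachable (Or.inl h))
  right_inv := by
    rintro ⟨a⟩
    rfl

theorem ncard_supp_eq_two_mul_ncard_orbit
    (c : (matchingGraph σ₁ ⊔ matchingGraph σ₂).ConnectedComponent) :
    c.supp.ncard = 2 * {a | Quotient.mk _ a = componentEquivOrbit σ₁ σ₂ c}.ncard := by
  rw [← ncard_leftEnd_preimage σ₁]
  congr 1
  ext u
  have index_mk :
      componentEquivOrbit σ₁ σ₂ (connectedComponentMk _ u) = Quotient.mk _ (leftEnd σ₁ u) := rfl
  rw [ConnectedComponent.mem_supp_iff, Set.mem_preimage, Set.mem_ofPred_eq, ← index_mk,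
    EmbeddingLike.apply_eq_iff_eq]

theorem sign_trans_symm_eq_neg_one_pow_card_components [Fintype α] [DecidableEq α] :
    sign (σ₁.trans σ₂.symm) = (-1) ^
      Nat.card {c : (matchingGraph σ₁ ⊔ matchingGraph σ₂).ConnectedComponent //
        c.supp.ncard % 4 = 0} := by
  rw [sign_eq_neg_one_pow_card_even_orbits]
  refine congrArg _ (Nat.card_congr ((componentEquivOrbit σ₁ σ₂).subtypeEquiv fun c => ?_)).symm
  rw [ncard_supp_eq_two_mul_ncard_orbit, Nat.even_iff]
  omega

end Matching

theorem stmt_0_general {α β : Type*} [Fintype α] [DecidableEq α] {G F₁ F₂ : SimpleGraph (α ⊕ β)}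
    (hF₁ : IsOneFactor G F₁) (hF₂ : IsOneFactor G F₂) {σ₁ σ₂ : α ≃ β}
    (hσ₁ : ∀ a, F₁.Adj (Sum.inl a) (Sum.inr (σ₁ a)))
    (hσ₂ : ∀ a, F₂.Adj (Sum.inl a) (Sum.inr (σ₂ a))) :
    Equiv.Perm.sign (σ₁.trans σ₂.symm) =
      (-1) ^ Nat.card {c : (F₁ ⊔ F₂).ConnectedComponent // c.supp.ncard % 4 = 0} := by
  rw [hF₁.eq_matchingGraph hσ₁, hF₂.eq_matchingGraph hσ₂]
  exact sign_trans_symm_eq_neg_one_pow_card_components σ₁ σ₂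

/-- let `G` be a bipartite graph on `X = {x_1, …, x_n}`,
`Y = {y_1, …, y_n}` (modelled on the vertex set `Fin n ⊕ Fin n`, with all edges going
between the two parts), let `F₁, F₂` be 1-factors of `G`, inducing permutations
`σ₁, σ₂` of `{1, …, n}` (where `x_i` is matched to `y_{σ i}`), and let `t` be the
number of cycles of `F₁ ∪ F₂` (i.e. connected components, a cycle of length `ℓ` having
`ℓ` vertices) whose length is `≡ 0 (mod 4)`. Then `sgn(F₁)·sgn(F₂) = (-1)^t`. -/
theorem stmt_0 (n : ℕ) (G : SimpleGraph (Fin n ⊕ Fin n))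
    (hbip : ∀ i j : Fin n,
      ¬ G.Adj (Sum.inl i) (Sum.inl j) ∧ ¬ G.Adj (Sum.inr i) (Sum.inr j))
    (F₁ F₂ : SimpleGraph (Fin n ⊕ Fin n))
    (hF₁ : IsOneFactor G F₁) (hF₂ : IsOneFactor G F₂)
    (σ₁ σ₂ : Equiv.Perm (Fin n))
    (hσ₁ : ∀ i : Fin n, F₁.Adj (Sum.inl i) (Sum.inr (σ₁ i)))
    (hσ₂ : ∀ i : Fin n, F₂.Adj (Sum.inl i) (Sum.inr (σ₂ i)))
    (t : ℕ)
    (ht : t = Nat.card {c : (F₁ ⊔ F₂).ConnectedComponent // c.supp.ncard % 4 = 0}) :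
    Equiv.Perm.sign σ₁ * Equiv.Perm.sign σ₂ = (-1) ^ t := by
  rw [ht, ← stmt_0_general hF₁ hF₂ hσ₁ hσ₂, Equiv.Perm.sign_trans, Equiv.Perm.sign_symm, mul_comm]
end

section
/- Let G_1 and G_2 be graphs, y ∈ V(G_1) a vertex of degree 3 with neighbours x_1, x_2, x_3, and x ∈ V(G_2) a vertex of degree 3 with neighbours y_1, y_2, y_3. Let G = (G_1 − y) ∪ (G_2 − x) ∪ {x_1y_1, x_2y_2, x_3y_3} be the star product of G_1 and G_2, with 3-edge-cut X = {x_1y_1, x_2y_2, x_3y_3}. Suppose G is bipartite and every pair of edges of X belongs to a common 2-factor of G. Then G is 2-factor Hamiltonian if and only if both G_1 and G_2 are 2-factor Hamiltonian. -/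
open SimpleGraph

/-- A 2-factor of `G`: a 2-regular spanning subgraph, given as a simple graph `F ≤ G`
in which every vertex has exactly two neighbours. -/
def IsTwoFactor {V : Type*} (G F : SimpleGraph V) : Prop :=
  F ≤ G ∧ ∀ v : V, (F.neighborSet v).ncard = 2

/-- A graph admitting a 2-factor is 2-factor Hamiltonian if every 2-factor of it is a
Hamiltonian cycle, i.e. every 2-factor is connected. -/
def TwoFactorHamiltonian {V : Type*} (G : SimpleGraph V) : Prop :=
  (∃ F, IsTwoFactor G F) ∧ ∀ F, IsTwoFactor G F → F.Connected

/-!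
In a star product, contracting one side of the 3-edge-cut to a vertex gives back one of the factors.
By the handshake lemma a 2-factor of the star product uses zero or two cut edges, and if it uses two
then both contractions turn it into 2-factors of `G₁` and `G₂`.

If `G` is 2-factor Hamiltonian, take a 2-factor of `G₁` and a 2-factor of `G` through the same two
cut edges; replacing the left part of the latter by the former gives a 2-factor of `G`. It is
connected, hence so is its contraction, the given 2-factor of `G₁`.

Conversely, counting the vertices of the left side with sign according to a 2-colouring, and
comparing with the 2-factors through two cut edges, shows that no 2-factor of `G` avoids the cut.
Both contractions of a 2-factor are then connected, so every vertex is joined to one of the two cut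
edges. As no edge of a 2-regular graph is a bridge, the two cut edges lie in the same component.
-/

section NearTwoFactor

variable {V : Type*} {G H : SimpleGraph V} {y : V}

/-- A near 2-factor of `G` at `y`: a spanning subgraph in which every vertex other than `y` has
exactly two neighbours. This is what becomes of a 2-factor of a star product when one of its sides
is contracted to the vertex `y`. -/
def IsNearTwoFactor (G H : SimpleGraph V) (y : V) : Prop :=
  H ≤ G ∧ ∀ v ≠ y, (H.neighborSet v).ncard = 2

theorem even_ncard_neighborSet_of_forall_ne [Finite V]
    (h : ∀ v ≠ y, Even (H.neighborSet v).ncard) : Even (H.neighborSet y).ncard := by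
  classical
  have := Fintype.ofFinite V
  have ncard_eq_degree : ∀ v, (H.neighborSet v).ncard = H.degree v := fun v ↦ by
    rw [← card_neighborFinset_eq_degree, ← Set.ncard_coe_finset, coe_neighborFinset]
  simp only [ncard_eq_degree] at h ⊢
  by_contra hodd
  obtain ⟨w, hwy, hw⟩ :=
    H.exists_ne_odd_degree_of_exists_odd_degree y (Nat.not_even_iff_odd.1 hodd)
  exact Nat.not_even_iff_odd.2 hw (h w hwy)

theorem IsNearTwoFactor.isTwoFactor [Finite V] (hH : IsNearTwoFactor G H y)
    (hy : (G.neighborSet y).ncard ≤ 3) (hne : (H.neighborSet y).Nonempty) :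
    IsTwoFactor G H := by
  have heven := even_ncard_neighborSet_of_forall_ne fun v hv ↦ (hH.2 v hv).symm ▸ even_two
  have hpos := hne.ncard_pos
  have hle : (H.neighborSet y).ncard ≤ (G.neighborSet y).ncard :=
    Set.ncard_le_ncard fun v hv ↦ hH.1 hv
  refine ⟨hH.1, fun v ↦ ?_⟩
  by_cases hv : v = y
  · subst hv
    grind
  · exact hH.2 v hv

theorem exists_alternating_of_colorable_two (hG : (G.induce {y}ᶜ).Colorable 2) :
    ∃ s : V → ℤ, s y = 0 ∧ (∀ v ≠ y, s v ≠ 0) ∧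
      ∀ v w, G.Adj v w → v ≠ y → w ≠ y → s v + s w = 0 := by
  classical
  obtain ⟨C⟩ := hG
  refine ⟨fun v ↦ if hv : v = y then 0 else if C ⟨v, hv⟩ = 0 then 1 else -1, by simp,
    fun v hv ↦ by simp only [hv, dite_false]; split_ifs <;> simp, fun v w hvw hv hw ↦ ?_⟩
  have hC : C ⟨v, hv⟩ ≠ C ⟨w, hw⟩ := C.valid hvw
  simp only [hv, hw, dite_false]
  split_ifs <;> first | rfl | omega

/-- Sum `s v + s w` over all darts `(v, w)`: only the darts at `y` contribute. -/
theorem IsNearTwoFactor.sum_neighborFinset_eq [Fintype V] [DecidableRel H.Adj]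
    (hH : IsNearTwoFactor G H y) {s : V → ℤ} (hy : s y = 0)
    (hs : ∀ v w, H.Adj v w → v ≠ y → w ≠ y → s v + s w = 0) :
    ∑ v ∈ H.neighborFinset y, s v = 2 * ∑ v, s v := by
  classical
  have hfst : ∑ v, ∑ w, (if H.Adj v w then s v else 0) = 2 * ∑ v, s v := by
    rw [Finset.mul_sum]
    refine Finset.sum_congr rfl fun v _ ↦ ?_
    by_cases hv : v = y
    · simp [hv, hy]
    · have hdeg := hH.2 v hv
      rw [← coe_neighborFinset, Set.ncard_coe_finset, neighborFinset_eq_filter] at hdeg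
      rw [← Finset.sum_filter, Finset.sum_const, hdeg, nsmul_eq_mul, Nat.cast_ofNat]
  have hsnd : ∑ v, ∑ w, (if H.Adj v w then s w else 0) = 2 * ∑ v, s v := by
    rw [← hfst, Finset.sum_comm]
    simp only [H.adj_comm]
  have hcancel : ∀ v w, (if H.Adj v w then s v else 0) + (if H.Adj v w then s w else 0) =
      (if v = y then if H.Adj y w then s w else 0 else 0) +
        (if w = y then if H.Adj y v then s v else 0 else 0) := by
    intro v w
    have := hs v w
    have := H.adj_comm v w
    by_cases hv : v = y <;> by_cases hw : w = y <;> grind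
  have hsum : 2 * ∑ v ∈ H.neighborFinset y, s v = 2 * ∑ v, s v + 2 * ∑ v, s v := by
    nth_rw 1 [← hfst]
    rw [← hsnd]
    simp only [← Finset.sum_add_distrib, hcancel]
    simp only [Finset.sum_add_distrib, Finset.sum_ite_eq', Finset.sum_ite_irrel,
      Finset.sum_const_zero, Finset.mem_univ, if_true, neighborFinset_eq_filter, Finset.sum_filter]
    ring
  linarith

/-- If `s = ±1` alternates off `y`, the sum of `s` over the `H`-neighbours of `y` is the same for
all near 2-factors `H`. Were it an empty sum, `s` would sum to zero over each of the three pairs of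
neighbours of `y`. -/
theorem IsNearTwoFactor.neighborSet_nonempty [Finite V] (hH : IsNearTwoFactor G H y)
    (hG : (G.induce {y}ᶜ).Colorable 2) (hy : (G.neighborSet y).ncard = 3)
    (hpairs : ∀ p q, G.Adj y p → G.Adj y q → p ≠ q →
      ∃ H', IsTwoFactor G H' ∧ H'.Adj y p ∧ H'.Adj y q) :
    (H.neighborSet y).Nonempty := by
  classical
  have := Fintype.ofFinite V
  obtain ⟨s, hsy, hs0, hs⟩ := exists_alternating_of_colorable_two hG
  by_contra hempty
  have htotal : 2 * ∑ v, s v = 0 := by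
    rw [← hH.sum_neighborFinset_eq hsy fun v w hvw ↦ hs v w (hH.1 hvw)]
    refine Finset.sum_eq_zero fun v hv ↦ (hempty ⟨v, ?_⟩).elim
    simpa using hv
  have hpair : ∀ p q, G.Adj y p → G.Adj y q → p ≠ q → s p + s q = 0 := by
    intro p q hp hq hpq
    obtain ⟨H', hH', hp', hq'⟩ := hpairs p q hp hq hpq
    have hN : H'.neighborFinset y = {p, q} := by
      refine (Finset.eq_of_subset_of_card_le (by simp [Finset.insert_subset_iff, hp', hq']) ?_).symm
      rw [Finset.card_pair hpq, ← Set.ncard_coe_finset, coe_neighborFinset, hH'.2]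
    have hnear : IsNearTwoFactor G H' y := ⟨hH'.1, fun v _ ↦ hH'.2 v⟩
    rw [← Finset.sum_pair hpq, ← hN,
      hnear.sum_neighborFinset_eq hsy fun v w hvw ↦ hs v w (hH'.1 hvw), htotal]
  obtain ⟨a, b, c, hab, hac, hbc, hN⟩ := Set.ncard_eq_three.1 hy
  have hadj : ∀ v, G.Adj y v ↔ v = a ∨ v = b ∨ v = c := fun v ↦ Set.ext_iff.1 hN v
  have ha := (hadj a).2 (by simp)
  have hb := (hadj b).2 (by simp)
  have hc := (hadj c).2 (by simp)
  have hsa := hs0 a ha.ne'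
  have := hpair a b ha hb hab
  have := hpair a c ha hc hac
  have := hpair b c hb hc hbc
  omega

end NearTwoFactor

section Contraction

variable {W V V' : Type*} {G F : SimpleGraph W} {π : W → V} {y : V}

/-- `π` contracts one side of a matching edge cut of `G`, namely the fibre over `y`, to the single
vertex `y`. The contracted graph is `G.map π`, since `SimpleGraph.map` discards the loops; the
matching condition ensures that no two edges become parallel at a vertex outside the fibre. -/
structure IsContraction (G : SimpleGraph W) (π : W → V) (y : V) : Prop where
  surjective : Function.Surjective π
  eq_of_apply_eq : ∀ ⦃a b⦄, π a = π b → π a ≠ y → a = b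
  eq_of_adj : ∀ ⦃a b c⦄, π a ≠ y → π b = y → π c = y → G.Adj a b → G.Adj a c → b = c

/-- Any two edges of the cut contracted by `π`, given by their end points other than `y` in the
contraction, lie in a common 2-factor of `G`. -/
def CutPairsCovered (G : SimpleGraph W) (π : W → V) (y : V) : Prop :=
  ∀ ⦃p q⦄, (G.map π).Adj y p → (G.map π).Adj y q → p ≠ q →
    ∃ F, IsTwoFactor G F ∧ (F.map π).Adj y p ∧ (F.map π).Adj y q

theorem exists_adj_of_reachable {a b : W} (h : F.Reachable a b) {S : Set W} (ha : a ∈ S)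
    (hb : b ∉ S) : ∃ c d, F.Reachable a c ∧ F.Adj c d ∧ c ∈ S ∧ d ∉ S := by
  classical
  obtain ⟨p⟩ := h
  obtain ⟨⟨⟨c, d⟩, hcd⟩, hmem, hc, hd⟩ := p.exists_boundary_dart S ha hb
  exact ⟨c, d, ⟨p.takeUntil c (p.dart_fst_mem_support_of_mem_darts hmem)⟩, hcd, hc, hd⟩

theorem reachable_map {a b : W} (h : F.Reachable a b) (π : W → V) :
    (F.map π).Reachable (π a) (π b) := by
  obtain ⟨p⟩ := h
  induction p with
  | nil => rfl
  | @cons u v w huv _ ih =>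
    by_cases hπ : π u = π v
    · rwa [hπ]
    · exact (map_adj_apply' huv hπ).reachable.trans ih

theorem connected_map (hF : F.Connected) (hπ : Function.Surjective π) : (F.map π).Connected :=
  have := hF.nonempty.map π
  ⟨hπ.forall₂.2 fun a b ↦ reachable_map (hF.preconnected a b) π⟩

namespace IsContraction

theorem mono (hπ : IsContraction G π y) (hF : F ≤ G) : IsContraction F π y :=
  ⟨hπ.surjective, hπ.eq_of_apply_eq,
    fun _ _ _ ha hb hc hab hac ↦ hπ.eq_of_adj ha hb hc (hF hab) (hF hac)⟩

theorem injOn_neighborSet (hπ : IsContraction G π y) {a : W} (ha : π a ≠ y) :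
    Set.InjOn π (G.neighborSet a) := by
  intro b hb c hc hbc
  by_cases hby : π b = y
  · exact hπ.eq_of_adj ha hby (hbc ▸ hby) hb hc
  · exact hπ.eq_of_apply_eq hbc hby

theorem neighborSet_map (hπ : IsContraction G π y) {a : W} (ha : π a ≠ y) :
    (G.map π).neighborSet (π a) = π '' G.neighborSet a := by
  ext q
  constructor
  · rintro ⟨-, b, c, hbc, hb, rfl⟩
    obtain rfl := hπ.eq_of_apply_eq hb.symm ha
    exact ⟨c, hbc, rfl⟩
  · rintro ⟨b, hab, rfl⟩
    exact map_adj_apply' hab fun hne ↦ hab.ne (hπ.eq_of_apply_eq hne ha)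

theorem ncard_neighborSet_map (hπ : IsContraction G π y) {a : W} (ha : π a ≠ y) :
    ((G.map π).neighborSet (π a)).ncard = (G.neighborSet a).ncard := by
  rw [hπ.neighborSet_map ha, (hπ.injOn_neighborSet ha).ncard_image]

theorem isNearTwoFactor_map (hπ : IsContraction G π y) (hF : IsTwoFactor G F) :
    IsNearTwoFactor (G.map π) (F.map π) y := by
  refine ⟨map_monotone π hF.1, fun v hv ↦ ?_⟩
  obtain ⟨a, rfl⟩ := hπ.surjective v
  rw [(hπ.mono hF.1).ncard_neighborSet_map hv, hF.2]

theorem exists_isTwoFactor_map [Finite V] (hπ : IsContraction G π y)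
    (hdeg : ((G.map π).neighborSet y).ncard = 3) (hcut : CutPairsCovered G π y) {p q : V}
    (hp : (G.map π).Adj y p) (hq : (G.map π).Adj y q) (hpq : p ≠ q) :
    ∃ F, IsTwoFactor G F ∧ IsTwoFactor (G.map π) (F.map π) ∧
      (F.map π).Adj y p ∧ (F.map π).Adj y q := by
  obtain ⟨F, hF, hFp, hFq⟩ := hcut hp hq hpq
  exact ⟨F, hF, (hπ.isNearTwoFactor_map hF).isTwoFactor hdeg.le ⟨p, hFp⟩, hFp, hFq⟩

theorem exists_isTwoFactor [Finite V] (hπ : IsContraction G π y)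
    (hdeg : ((G.map π).neighborSet y).ncard = 3) (hcut : CutPairsCovered G π y) :
    ∃ F, IsTwoFactor G F ∧ IsTwoFactor (G.map π) (F.map π) := by
  obtain ⟨p, hp, q, hq, hpq⟩ := (Set.one_lt_ncard (Set.finite_of_ncard_ne_zero (by omega))).1
    (by omega : 1 < ((G.map π).neighborSet y).ncard)
  obtain ⟨F, hF, hFπ, -⟩ := hπ.exists_isTwoFactor_map hdeg hcut hp hq hpq
  exact ⟨F, hF, hFπ⟩

end IsContraction

/-- The graph which agrees with the pullback of `H` along `π` outside the fibre over `y`, and with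
`F` on all edges meeting that fibre. -/
def splice (F : SimpleGraph W) (π : W → V) (y : V) (H : SimpleGraph V) : SimpleGraph W where
  Adj a b := (π a ≠ y ∧ π b ≠ y ∧ H.Adj (π a) (π b)) ∨ ((π a = y ∨ π b = y) ∧ F.Adj a b)
  symm := ⟨fun a b ↦ by simp only [H.adj_comm (π a), F.adj_comm a]; tauto⟩
  loopless := ⟨fun a ↦ by simp⟩

namespace IsContraction

variable {H : SimpleGraph V}

theorem map_splice (hπ : IsContraction G π y)
    (hH : ∀ p, H.Adj y p ↔ (F.map π).Adj y p) : (splice F π y H).map π = H := by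
  ext p q
  constructor
  · rintro ⟨hne, a, b, ⟨-, -, hab⟩ | ⟨rfl | rfl, hab⟩, rfl, rfl⟩
    · exact hab
    · exact (hH _).2 ⟨hne, a, b, hab, rfl, rfl⟩
    · exact ((hH _).2 ⟨hne.symm, b, a, hab.symm, rfl, rfl⟩).symm
  · intro hpq
    by_cases hp : p = y
    · subst hp
      obtain ⟨hne, a, b, hab, ha, hb⟩ := (hH q).1 hpq
      exact ⟨hne, a, b, .inr ⟨.inl ha, hab⟩, ha, hb⟩
    by_cases hq : q = y
    · subst hq
      obtain ⟨hne, a, b, hab, ha, hb⟩ := (hH p).1 hpq.symm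
      exact ⟨hne.symm, b, a, .inr ⟨.inr ha, hab.symm⟩, hb, ha⟩
    obtain ⟨a, rfl⟩ := hπ.surjective p
    obtain ⟨b, rfl⟩ := hπ.surjective q
    exact ⟨hpq.ne, a, b, .inl ⟨hp, hq, hpq⟩, rfl, rfl⟩

theorem splice_le (hπ : IsContraction G π y) (hF : F ≤ G) (hH : H ≤ G.map π) :
    splice F π y H ≤ G := by
  rintro a b (⟨ha, hb, hab⟩ | ⟨-, hab⟩)
  · obtain ⟨-, c, d, hcd, hc, hd⟩ := hH hab
    obtain rfl := hπ.eq_of_apply_eq hc.symm ha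
    obtain rfl := hπ.eq_of_apply_eq hd.symm hb
    exact hcd
  · exact hF hab

theorem isTwoFactor_splice (hπ : IsContraction G π y) (hF : IsTwoFactor G F)
    (hH : IsTwoFactor (G.map π) H) (hHF : ∀ p, H.Adj y p ↔ (F.map π).Adj y p) :
    IsTwoFactor G (splice F π y H) := by
  have hle := hπ.splice_le hF.1 hH.1
  refine ⟨hle, fun a ↦ ?_⟩
  by_cases ha : π a = y
  · have : (splice F π y H).neighborSet a = F.neighborSet a := by
      ext b
      simp [splice, ha]
    rw [this, hF.2]
  · rw [← (hπ.mono hle).ncard_neighborSet_map ha, hπ.map_splice hHF, hH.2]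

end IsContraction

theorem TwoFactorHamiltonian.map [Finite V] (hG : TwoFactorHamiltonian G)
    (hπ : IsContraction G π y) (hdeg : ((G.map π).neighborSet y).ncard = 3)
    (hcut : CutPairsCovered G π y) : TwoFactorHamiltonian (G.map π) := by
  constructor
  · exact (hπ.exists_isTwoFactor hdeg hcut).imp' _ fun _ h ↦ h.2
  · intro H hH
    obtain ⟨p, q, hpq, hNH⟩ := Set.ncard_eq_two.1 (hH.2 y)
    have hp : H.Adj y p := hNH.symm.subset (by simp)
    have hq : H.Adj y q := hNH.symm.subset (by simp)
    obtain ⟨F, hF, hFπ, hFp, hFq⟩ :=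
      hπ.exists_isTwoFactor_map hdeg hcut (hH.1 hp) (hH.1 hq) hpq
    have hNF : {p, q} = (F.map π).neighborSet y :=
      Set.eq_of_subset_of_ncard_le (by simp [Set.insert_subset_iff, hFp, hFq])
        (by rw [hFπ.2, Set.ncard_pair hpq])
    have hHF : ∀ r, H.Adj y r ↔ (F.map π).Adj y r := Set.ext_iff.1 (hNH.trans hNF)
    rw [← hπ.map_splice hHF]
    exact connected_map (hG.2 _ (hπ.isTwoFactor_splice hF hH hHF)) hπ.surjective

theorem IsContraction.exists_reachable_fiber (hπ : IsContraction G π y)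
    (hG : (G.map π).Connected) (a : W) : ∃ b, G.Reachable a b ∧ π b = y := by
  by_contra! hy
  obtain ⟨_, _, -, ⟨-, b, c, hbc, rfl, rfl⟩, ⟨b', hab', hb'⟩, hc⟩ :=
    exists_adj_of_reachable (hG.preconnected (π a) y) (S := π '' {b | G.Reachable a b})
      ⟨a, .rfl, rfl⟩ (by rintro ⟨b, hab, hb⟩; exact hy b hab hb)
  obtain rfl := hπ.eq_of_apply_eq hb' (hy b' hab')
  exact hc ⟨c, hab'.trans hbc.reachable, rfl⟩

/-- As an edge of a 2-regular graph is not a bridge, a walk avoiding the first cut edge joins its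
two ends; this walk has to use the second cut edge. -/
theorem IsContraction.reachable_of_cut_edges [Finite W] (hπ : IsContraction F π y)
    (hF : F.IsCycles) (hdeg : ((F.map π).neighborSet y).ncard = 2) {a b c d : W}
    (ha : π a ≠ y) (hb : π b = y) (hab : F.Adj a b)
    (hc : π c ≠ y) (hd : π d = y) (hcd : F.Adj c d) : F.Reachable a c := by
  by_cases hac : π a = π c
  · rw [hπ.eq_of_apply_eq hac ha]
  have hN : ∀ {u v}, π u ≠ y → π v = y → F.Adj u v → π u ∈ (F.map π).neighborSet y :=
    fun hu hv huv ↦ hv ▸ map_adj_apply' huv.symm (hv.trans_ne hu.symm)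
  have hN_eq : {π a, π c} = (F.map π).neighborSet y :=
    Set.eq_of_subset_of_ncard_le (by simp only [Set.insert_subset_iff, Set.singleton_subset_iff,
      hN ha hb hab, hN hc hd hcd, and_self]) (by rw [hdeg, Set.ncard_pair hac])
      (Set.finite_of_ncard_ne_zero (by omega))
  obtain ⟨u, v, hau, huv', hu, hv⟩ := exists_adj_of_reachable (hF.reachable_deleteEdges hab)
    (S := {w | π w ≠ y}) ha (by simpa using hb)
  obtain ⟨huv, hne⟩ := deleteEdges_adj.1 huv'
  replace hv : π v = y := not_not.1 hv
  rcases hN_eq.symm.subset (hN hu hv huv) with hua | huc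
  · obtain rfl := hπ.eq_of_apply_eq hua hu
    obtain rfl := hπ.eq_of_adj hu hb hv hab huv
    exact (hne rfl).elim
  · obtain rfl := hπ.eq_of_apply_eq huc hu
    exact hau.mono (deleteEdges_le _)

theorem IsContraction.connected [Finite W] {ψ : W → V'} {x : V'} (hπ : IsContraction F π y)
    (hψ : IsContraction F ψ x) (hπψ : ∀ a, π a = y ↔ ψ a ≠ x) (hF : F.IsCycles)
    (hdeg : ((F.map π).neighborSet y).ncard = 2) (hFπ : (F.map π).Connected)
    (hFψ : (F.map ψ).Connected) : F.Connected := by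
  have hcross : ∀ w, ∃ c d, F.Reachable w c ∧ F.Adj c d ∧ π c ≠ y ∧ π d = y := by
    intro w
    obtain ⟨a, hwa, ha⟩ := hψ.exists_reachable_fiber hFψ w
    obtain ⟨b, hab, hb⟩ := hπ.exists_reachable_fiber hFπ a
    obtain ⟨c, d, hac, hcd, hc, hd⟩ := exists_adj_of_reachable hab (S := {w | π w ≠ y})
      (fun h ↦ (hπψ a).1 h ha) (by simpa using hb)
    exact ⟨c, d, hwa.trans hac, hcd, hc, not_not.1 hd⟩
  have : Nonempty W := (hπ.surjective y).nonempty
  refine ⟨fun u v ↦ ?_⟩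
  obtain ⟨a, b, hua, hab, ha, hb⟩ := hcross u
  obtain ⟨c, d, hvc, hcd, hc, hd⟩ := hcross v
  exact (hua.trans (hπ.reachable_of_cut_edges hF hdeg ha hb hab hc hd hcd)).trans hvc.symm

theorem TwoFactorHamiltonian.of_map [Finite W] {ψ : W → V'} {x : V'}
    (hπ : IsContraction G π y) (hψ : IsContraction G ψ x) (hπψ : ∀ a, π a = y ↔ ψ a ≠ x)
    (hy : ((G.map π).neighborSet y).ncard = 3) (hx : ((G.map ψ).neighborSet x).ncard = 3)
    (hbip : ((G.map π).induce {y}ᶜ).Colorable 2) (hcut : CutPairsCovered G π y)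
    (hGπ : TwoFactorHamiltonian (G.map π)) (hGψ : TwoFactorHamiltonian (G.map ψ)) :
    TwoFactorHamiltonian G := by
  have := Finite.of_surjective π hπ.surjective
  have := Finite.of_surjective ψ hψ.surjective
  constructor
  · exact (hπ.exists_isTwoFactor hy hcut).imp fun _ h ↦ h.1
  · intro F hF
    have hnonempty : ((F.map π).neighborSet y).Nonempty :=
      (hπ.isNearTwoFactor_map hF).neighborSet_nonempty hbip hy fun p q hp hq hpq ↦
        (hπ.exists_isTwoFactor_map hy hcut hp hq hpq).imp' _ fun _ h ↦ h.2
    have hFπ := (hπ.isNearTwoFactor_map hF).isTwoFactor hy.le hnonempty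
    obtain ⟨_, hne, b, a, hba, hb, rfl⟩ := hnonempty
    have ha : ψ a = x := not_not.1 fun h ↦ hne ((hπψ a).2 h).symm
    have hFψ := (hψ.isNearTwoFactor_map hF).isTwoFactor hx.le
      ⟨ψ b, ha ▸ map_adj_apply' hba.symm (ha.trans_ne ((hπψ b).1 hb).symm)⟩
    exact (hπ.mono hF.1).connected (hψ.mono hF.1) hπψ (fun v _ ↦ hF.2 v) (hFπ.2 y)
      (hGπ.2 _ hFπ) (hGψ.2 _ hFψ)

end Contraction

section StarProduct

variable {V₁ V₂ W : Type*} {G₁ : SimpleGraph V₁} {G₂ : SimpleGraph V₂} {y : V₁} {x : V₂}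
  {xs : Fin 3 → V₁} {ys : Fin 3 → V₂} {e : W → V₁ ⊕ V₂} {G : SimpleGraph W}

/-- `G` is the star product `(G₁, y) * (G₂, x)`, its vertices being identified by `e` with those of
the disjoint union of `G₁ - y` and `G₂ - x`. Leaving the vertex type arbitrary makes the notion
symmetric in the two factors. -/
structure IsStarProduct (G₁ : SimpleGraph V₁) (G₂ : SimpleGraph V₂) (y : V₁) (x : V₂)
    (xs : Fin 3 → V₁) (ys : Fin 3 → V₂) (e : W → V₁ ⊕ V₂) (G : SimpleGraph W) : Prop where
  xs_injective : Function.Injective xs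
  ys_injective : Function.Injective ys
  neighborSet_left : G₁.neighborSet y = Set.range xs
  neighborSet_right : G₂.neighborSet x = Set.range ys
  injective : Function.Injective e
  mem_range_iff : ∀ z, z ∈ Set.range e ↔ z ≠ Sum.inl y ∧ z ≠ Sum.inr x
  adj_iff : ∀ a b, G.Adj a b ↔
    ((∃ p q : V₁, e a = Sum.inl p ∧ e b = Sum.inl q ∧ G₁.Adj p q) ∨
     (∃ p q : V₂, e a = Sum.inr p ∧ e b = Sum.inr q ∧ G₂.Adj p q) ∨
     (∃ i : Fin 3, (e a = Sum.inl (xs i) ∧ e b = Sum.inr (ys i)) ∨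
                   (e a = Sum.inr (ys i) ∧ e b = Sum.inl (xs i))))

/-- The left contraction of a star product, sending every vertex of the right factor to `y`. -/
def leftContraction (e : W → V₁ ⊕ V₂) (y : V₁) (a : W) : V₁ := (e a).elim id fun _ ↦ y

theorem leftContraction_of_eq_inl {a : W} {p : V₁} (h : e a = Sum.inl p) :
    leftContraction e y a = p := by
  simp [leftContraction, h]

theorem leftContraction_of_eq_inr {a : W} {q : V₂} (h : e a = Sum.inr q) :
    leftContraction e y a = y := by
  simp [leftContraction, h]

theorem eq_inl_of_leftContraction_ne {a : W} (h : leftContraction e y a ≠ y) :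
    e a = Sum.inl (leftContraction e y a) := by
  cases ha : e a with
  | inl p => rw [leftContraction_of_eq_inl ha]
  | inr q => exact (h (leftContraction_of_eq_inr ha)).elim

theorem sum_swap_eq_inl_iff {α β : Type*} {z : α ⊕ β} {b : β} :
    z.swap = Sum.inl b ↔ z = Sum.inr b := by
  cases z <;> simp

theorem sum_swap_eq_inr_iff {α β : Type*} {z : α ⊕ β} {a : α} :
    z.swap = Sum.inr a ↔ z = Sum.inl a := by
  cases z <;> simp

namespace IsStarProduct

theorem swap (h : IsStarProduct G₁ G₂ y x xs ys e G) :
    IsStarProduct G₂ G₁ x y ys xs (Sum.swap ∘ e) G where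
  xs_injective := h.ys_injective
  ys_injective := h.xs_injective
  neighborSet_left := h.neighborSet_right
  neighborSet_right := h.neighborSet_left
  injective := Sum.swap_leftInverse.injective.comp h.injective
  mem_range_iff z := by
    have := h.mem_range_iff z.swap
    cases z <;> simp_all [sum_swap_eq_inl_iff, sum_swap_eq_inr_iff]
  adj_iff a b := by
    simp only [h.adj_iff, Function.comp_apply, sum_swap_eq_inl_iff, sum_swap_eq_inr_iff]
    rw [or_left_comm]
    simp only [or_comm]

theorem adj_left (h : IsStarProduct G₁ G₂ y x xs ys e G) (i : Fin 3) : G₁.Adj y (xs i) :=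
  h.neighborSet_left.symm.subset ⟨i, rfl⟩

theorem adj_right (h : IsStarProduct G₁ G₂ y x xs ys e G) (i : Fin 3) : G₂.Adj x (ys i) :=
  h.swap.adj_left i

theorem exists_eq_inl (h : IsStarProduct G₁ G₂ y x xs ys e G) {p : V₁} (hp : p ≠ y) :
    ∃ a, e a = Sum.inl p :=
  (h.mem_range_iff _).2 ⟨by simpa using hp, by simp⟩

theorem exists_eq_inr (h : IsStarProduct G₁ G₂ y x xs ys e G) {q : V₂} (hq : q ≠ x) :
    ∃ b, e b = Sum.inr q :=
  (h.mem_range_iff _).2 ⟨by simp, by simpa using hq⟩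

theorem leftContraction_eq_iff (h : IsStarProduct G₁ G₂ y x xs ys e G) (a : W) :
    leftContraction e y a = y ↔ leftContraction (Sum.swap ∘ e) x a ≠ x := by
  have ha := (h.mem_range_iff (e a)).1 ⟨a, rfl⟩
  cases hea : e a <;> simp_all [leftContraction]

theorem exists_cut_index (h : IsStarProduct G₁ G₂ y x xs ys e G) {a b : W} (hab : G.Adj a b)
    (ha : leftContraction e y a ≠ y) (hb : leftContraction e y b = y) :
    ∃ i, e a = Sum.inl (xs i) ∧ e b = Sum.inr (ys i) := by
  rcases (h.adj_iff a b).1 hab with ⟨p, q, -, hq, -⟩ | ⟨p, q, hp, -⟩ | ⟨i, hi | hi⟩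
  · exact ((h.mem_range_iff _).1 ⟨b, rfl⟩).1 ((leftContraction_of_eq_inl hq ▸ hb) ▸ hq) |>.elim
  · exact (ha (leftContraction_of_eq_inr hp)).elim
  · exact ⟨i, hi⟩
  · exact (ha (leftContraction_of_eq_inr hi.1)).elim

theorem isContraction (h : IsStarProduct G₁ G₂ y x xs ys e G) :
    IsContraction G (leftContraction e y) y where
  surjective p := by
    by_cases hp : p = y
    · obtain ⟨b, hb⟩ := h.exists_eq_inr (h.adj_right 0).ne'
      exact ⟨b, hp ▸ leftContraction_of_eq_inr hb⟩
    · exact (h.exists_eq_inl hp).imp fun _ ↦ leftContraction_of_eq_inl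
  eq_of_apply_eq a b hab ha := h.injective <| by
    rw [eq_inl_of_leftContraction_ne ha, hab, ← eq_inl_of_leftContraction_ne (hab ▸ ha)]
  eq_of_adj a b c ha hb hc hab hac := by
    obtain ⟨i, hai, hbi⟩ := h.exists_cut_index hab ha hb
    obtain ⟨j, haj, hcj⟩ := h.exists_cut_index hac ha hc
    have hij : i = j := h.xs_injective (Sum.inl_injective (hai.symm.trans haj))
    exact h.injective (by rw [hbi, hcj, hij])

theorem map_adj_of_cut (h : IsStarProduct G₁ G₂ y x xs ys e G) {F : SimpleGraph W} {a b : W}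
    {i : Fin 3} (ha : e a = Sum.inl (xs i)) (hb : e b = Sum.inr (ys i)) (hab : F.Adj a b) :
    (F.map (leftContraction e y)).Adj y (xs i) :=
  ⟨(h.adj_left i).ne, b, a, hab.symm, leftContraction_of_eq_inr hb, leftContraction_of_eq_inl ha⟩

theorem map_leftContraction (h : IsStarProduct G₁ G₂ y x xs ys e G) :
    G.map (leftContraction e y) = G₁ := by
  have adj_y : ∀ q, G₁.Adj y q → (G.map (leftContraction e y)).Adj y q := by
    intro q hq
    obtain ⟨i, rfl⟩ := h.neighborSet_left.subset hq
    obtain ⟨a, ha⟩ := h.exists_eq_inl hq.ne'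
    obtain ⟨b, hb⟩ := h.exists_eq_inr (h.adj_right i).ne'
    exact h.map_adj_of_cut ha hb ((h.adj_iff a b).2 (.inr (.inr ⟨i, .inl ⟨ha, hb⟩⟩)))
  ext p q
  constructor
  · rintro ⟨hne, a, b, hab, rfl, rfl⟩
    rcases (h.adj_iff a b).1 hab with
      ⟨p, q, ha, hb, hpq⟩ | ⟨p, q, ha, hb, -⟩ | ⟨i, ⟨ha, hb⟩ | ⟨ha, hb⟩⟩
    · rwa [leftContraction_of_eq_inl ha, leftContraction_of_eq_inl hb]
    · exact (hne (by rw [leftContraction_of_eq_inr ha, leftContraction_of_eq_inr hb])).elim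
    · rw [leftContraction_of_eq_inl ha, leftContraction_of_eq_inr hb]
      exact (h.adj_left i).symm
    · rw [leftContraction_of_eq_inr ha, leftContraction_of_eq_inl hb]
      exact h.adj_left i
  · intro hpq
    by_cases hp : p = y
    · exact hp ▸ adj_y q (hp ▸ hpq)
    by_cases hq : q = y
    · exact hq ▸ (adj_y p (hq ▸ hpq.symm)).symm
    obtain ⟨a, ha⟩ := h.exists_eq_inl hp
    obtain ⟨b, hb⟩ := h.exists_eq_inl hq
    exact ⟨hpq.ne, a, b, (h.adj_iff a b).2 (.inl ⟨p, q, ha, hb, hpq⟩),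
      leftContraction_of_eq_inl ha, leftContraction_of_eq_inl hb⟩

theorem ncard_neighborSet_map_leftContraction (h : IsStarProduct G₁ G₂ y x xs ys e G) :
    ((G.map (leftContraction e y)).neighborSet y).ncard = 3 := by
  rw [h.map_leftContraction, h.neighborSet_left, ← Set.image_univ,
    Set.ncard_image_of_injective _ h.xs_injective, Set.ncard_univ, Nat.card_fin]

theorem cutPairsCovered (h : IsStarProduct G₁ G₂ y x xs ys e G)
    (hcut : ∀ i j : Fin 3, i ≠ j → ∃ F, IsTwoFactor G F ∧
      (∃ a b, e a = Sum.inl (xs i) ∧ e b = Sum.inr (ys i) ∧ F.Adj a b) ∧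
      (∃ a b, e a = Sum.inl (xs j) ∧ e b = Sum.inr (ys j) ∧ F.Adj a b)) :
    CutPairsCovered G (leftContraction e y) y := by
  intro p q hp hq hpq
  rw [h.map_leftContraction] at hp hq
  obtain ⟨i, rfl⟩ := h.neighborSet_left.subset hp
  obtain ⟨j, rfl⟩ := h.neighborSet_left.subset hq
  obtain ⟨F, hF, ⟨a, b, ha, hb, hab⟩, ⟨c, d, hc, hd, hcd⟩⟩ := hcut i j (ne_of_apply_ne xs hpq)
  exact ⟨F, hF, h.map_adj_of_cut ha hb hab, h.map_adj_of_cut hc hd hcd⟩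

theorem colorable_induce_left (h : IsStarProduct G₁ G₂ y x xs ys e G) {n : ℕ}
    (hG : G.Colorable n) : (G₁.induce {y}ᶜ).Colorable n := by
  choose f hf using fun p : ({y}ᶜ : Set V₁) ↦ h.exists_eq_inl p.2
  exact hG.of_hom
    ⟨f, fun {p q} hpq ↦ (h.adj_iff _ _).2 (.inl ⟨p, q, hf p, hf q, hpq⟩)⟩

end IsStarProduct

end StarProduct

theorem stmt_1_general {V₁ V₂ W : Type*} [Finite W] {G₁ : SimpleGraph V₁} {G₂ : SimpleGraph V₂}
    {y : V₁} {x : V₂} {xs : Fin 3 → V₁} {ys : Fin 3 → V₂} {e : W → V₁ ⊕ V₂} {G : SimpleGraph W}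
    (hG : IsStarProduct G₁ G₂ y x xs ys e G) (hbip : (G₁.induce {y}ᶜ).Colorable 2)
    (hcut : ∀ i j : Fin 3, i ≠ j → ∃ F, IsTwoFactor G F ∧
      (∃ a b, e a = Sum.inl (xs i) ∧ e b = Sum.inr (ys i) ∧ F.Adj a b) ∧
      (∃ a b, e a = Sum.inl (xs j) ∧ e b = Sum.inr (ys j) ∧ F.Adj a b)) :
    TwoFactorHamiltonian G ↔ TwoFactorHamiltonian G₁ ∧ TwoFactorHamiltonian G₂ := by
  have := Finite.of_surjective _ hG.isContraction.surjective
  have := Finite.of_surjective _ hG.swap.isContraction.surjective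
  have hcutLeft := hG.cutPairsCovered hcut
  have hcutRight := hG.swap.cutPairsCovered fun i j hij ↦ by
    obtain ⟨F, hF, ⟨a, b, ha, hb, hab⟩, ⟨c, d, hc, hd, hcd⟩⟩ := hcut i j hij
    exact ⟨F, hF, ⟨b, a, by simp [ha, hb, hab.symm]⟩, ⟨d, c, by simp [hc, hd, hcd.symm]⟩⟩
  rw [← hG.map_leftContraction] at hbip
  rw [← hG.map_leftContraction, ← hG.swap.map_leftContraction]
  constructor
  · intro h
    exact ⟨h.map hG.isContraction hG.ncard_neighborSet_map_leftContraction hcutLeft,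
      h.map hG.swap.isContraction hG.swap.ncard_neighborSet_map_leftContraction hcutRight⟩
  · rintro ⟨h₁, h₂⟩
    exact .of_map hG.isContraction hG.swap.isContraction hG.leftContraction_eq_iff
      hG.ncard_neighborSet_map_leftContraction hG.swap.ncard_neighborSet_map_leftContraction
      hbip hcutLeft h₁ h₂

/-- let `y` be a vertex of degree 3 of `G₁` with neighbours
`xs 0, xs 1, xs 2`, let `x` be a vertex of degree 3 of `G₂` with neighbours
`ys 0, ys 1, ys 2`, and let `G` be the star product `(G₁, y) * (G₂, x)`, i.e. the graph
on `(V₁ ⊕ V₂) \ {inl y, inr x}` obtained from the disjoint union of `G₁ - y` and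
`G₂ - x` by adding the three edges `xs i — ys i` (forming the 3-edge-cut `X`).
If `G` is bipartite and every pair of edges of `X` lies in a common 2-factor of `G`,
then `G` is 2-factor Hamiltonian iff both `G₁` and `G₂` are 2-factor Hamiltonian. -/
theorem stmt_1 {V₁ V₂ : Type*} [Fintype V₁] [Fintype V₂]
    (G₁ : SimpleGraph V₁) (G₂ : SimpleGraph V₂) (y : V₁) (x : V₂)
    (xs : Fin 3 → V₁) (ys : Fin 3 → V₂)
    (hxs : Function.Injective xs) (hys : Function.Injective ys)
    (hdegy : G₁.neighborSet y = Set.range xs)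
    (hdegx : G₂.neighborSet x = Set.range ys)
    (G : SimpleGraph {a : V₁ ⊕ V₂ // a ≠ Sum.inl y ∧ a ≠ Sum.inr x})
    (hG : ∀ a b : {a : V₁ ⊕ V₂ // a ≠ Sum.inl y ∧ a ≠ Sum.inr x}, G.Adj a b ↔
      ((∃ p q : V₁, a.1 = Sum.inl p ∧ b.1 = Sum.inl q ∧ G₁.Adj p q) ∨
       (∃ p q : V₂, a.1 = Sum.inr p ∧ b.1 = Sum.inr q ∧ G₂.Adj p q) ∨
       (∃ i : Fin 3, (a.1 = Sum.inl (xs i) ∧ b.1 = Sum.inr (ys i)) ∨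
                     (a.1 = Sum.inr (ys i) ∧ b.1 = Sum.inl (xs i)))))
    (hbip : G.Colorable 2)
    (hcut : ∀ i j : Fin 3, i ≠ j → ∃ F, IsTwoFactor G F ∧
      (∃ a b, a.1 = Sum.inl (xs i) ∧ b.1 = Sum.inr (ys i) ∧ F.Adj a b) ∧
      (∃ a b, a.1 = Sum.inl (xs j) ∧ b.1 = Sum.inr (ys j) ∧ F.Adj a b)) :
    TwoFactorHamiltonian G ↔ (TwoFactorHamiltonian G₁ ∧ TwoFactorHamiltonian G₂) := by
  have hstar : IsStarProduct G₁ G₂ y x xs ys Subtype.val G :=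
    ⟨hxs, hys, hdegy, hdegx, Subtype.val_injective, fun z ↦ by simp, hG⟩
  exact stmt_1_general hstar (hstar.colorable_induce_left hbip) hcut
end

section
/- Let G be a 2-factor Hamiltonian cubic bipartite graph. Then G is 3-connected and the number of vertices of G satisfies |V(G)| ≡ 2 (mod 4). -/
open SimpleGraph

/-- `G` is 3-connected: it has more than 3 vertices and deleting any set of fewer
than 3 vertices leaves it connected. -/
def ThreeConnected {V : Type*} [Fintype V] (G : SimpleGraph V) : Prop :=
  3 < Fintype.card V ∧ ∀ S : Set V, S.ncard < 3 → (G.induce (Sᶜ : Set V)).Connected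

/-!
By Hall's theorem the edges of a regular bipartite graph split into perfect matchings. If the graph
is cubic and 2-factor Hamiltonian, the union of any two of the three matchings is a connected
2-factor.

*Connectivity.* Let `X` be a nonempty union of components of `G - S` with `X ∪ S ≠ V`, and let
`T i ⊆ S` be the set of vertices outside `X` that the `i`-th matching sends into `X`. The `i`-th
matching preserves `X ∪ T i`, so all `T i` have the parity of `X`; and `T i ≠ T j` for `i ≠ j`, as
otherwise `X ∪ T i` would be closed under a connected 2-factor. If `|S| ≤ 2`, this forces
`T 0 ∆ T 1 = S = T 0 ∆ T 2`, whence `T 1 = T 2`, a contradiction.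

*Order.* Following matching `i` and then matching `j` permutes a colour class `A` in a single cycle,
of sign `-(-1) ^ |A|`. The permutations for `(0, 1)` and `(1, 2)` compose to the one for `(0, 2)`,
so this sign equals its own square, and `|A| = |V| / 2` is odd.
-/

open Function Finset
open scoped symmDiff

section Parity

variable {α : Type*}

theorem even_card_of_involutive {f : α → α} (hf : Involutive f) (hfix : ∀ a, f a ≠ a)
    {s : Finset α} (hs : ∀ a ∈ s, f a ∈ s) : Even #s := by
  have hsum : ∑ _a ∈ s, (1 : ZMod 2) = 0 :=
    sum_involution (fun a _ ↦ f a) (fun _ _ ↦ by decide) (fun a _ _ ↦ hfix a) hs (fun a _ ↦ hf a)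
  rwa [sum_const, nsmul_one, ZMod.natCast_eq_zero_iff_even] at hsum

variable [DecidableEq α]

theorem even_card_symmDiff_iff {s t : Finset α} : Even #(s ∆ t) ↔ (Even #s ↔ Even #t) := by
  have hst : #(s ∆ t) = #(s \ t) + #(t \ s) := card_union_of_disjoint disjoint_sdiff_sdiff
  have hs := card_sdiff_add_card_inter s t
  have ht := card_sdiff_add_card_inter t s
  rw [inter_comm] at ht
  rw [hst, ← hs, ← ht]
  simp only [Nat.even_add]
  tauto

theorem symmDiff_eq_of_subset_of_card_le_two {s t u : Finset α} (hu : #u ≤ 2) (hs : s ⊆ u)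
    (ht : t ⊆ u) (hne : s ≠ t) (hst : Even #s ↔ Even #t) : s ∆ t = u := by
  have hpos : 0 < #(s ∆ t) := card_pos.2 (symmDiff_nonempty.2 hne)
  have heven : Even #(s ∆ t) := even_card_symmDiff_iff.2 hst
  have htwo : 2 ≤ #(s ∆ t) := Nat.le_of_dvd hpos heven.two_dvd
  exact eq_of_subset_of_card_le (symmDiff_subset_union.trans (union_subset hs ht)) (hu.trans htwo)

end Parity

section Graph

variable {V : Type*} {G : SimpleGraph V} {d : ℕ}

theorem preconnected_iff_forall_adj_closed_eq_univ :
    G.Preconnected ↔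
      ∀ X : Set V, X.Nonempty → (∀ v ∈ X, ∀ w, G.Adj v w → w ∈ X) → X = Set.univ := by
  constructor
  · rintro hG X ⟨v, hv⟩ hX
    refine Set.eq_univ_of_forall fun w ↦ by_contra fun hw ↦ ?_
    obtain ⟨p⟩ := hG v w
    obtain ⟨e, -, hfst, hsnd⟩ := p.exists_boundary_dart X hv hw
    exact hsnd (hX _ hfst _ e.adj)
  · intro hG v w
    have hcomponent : {u | G.Reachable v u} = Set.univ :=
      hG _ ⟨v, Reachable.refl v⟩ fun _ hu _ hadj ↦ hu.trans hadj.reachable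
    exact hcomponent.ge (Set.mem_univ w)

theorem ncard_le_ncard_biUnion_neighborSet [Finite V] (hd : 0 < d)
    (hG : ∀ v, (G.neighborSet v).ncard = d) (s : Set V) :
    s.ncard ≤ (⋃ v ∈ s, G.neighborSet v).ncard := by
  classical
  have := Fintype.ofFinite V
  obtain ⟨s, rfl⟩ := s.toFinite.exists_finset_coe
  obtain ⟨t, ht⟩ := (⋃ v ∈ s, G.neighborSet v).toFinite.exists_finset_coe
  simp only [mem_coe, ← ht, Set.ncard_coe_finset]
  refine Nat.le_of_mul_le_mul_right (card_mul_le_card_mul G.Adj (fun v hv ↦ ?_) fun w _ ↦ ?_) hd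
  · rw [← hG v, ← Set.ncard_coe_finset]
    refine Set.ncard_le_ncard fun w hw ↦ ?_
    have hwt : w ∈ t := by
      rw [← mem_coe, ht]
      exact Set.mem_biUnion hv hw
    simpa [hwt] using hw
  · rw [← hG w, ← Set.ncard_coe_finset]
    exact Set.ncard_le_ncard fun v hv ↦ ((mem_bipartiteBelow _).1 hv).2.symm

theorem exists_isPerfectMatching_of_regular [Finite V] (hbip : G.IsBipartite) (hd : 0 < d)
    (hG : ∀ v, (G.neighborSet v).ncard = d) : ∃ M : G.Subgraph, M.IsPerfectMatching := by
  classical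
  have := Fintype.ofFinite V
  obtain ⟨s, t, hst⟩ := hbip.exists_isBipartiteWith
  exact exists_isPerfectMatching_of_forall_ncard_le hst (ncard_le_ncard_biUnion_neighborSet hd hG)

theorem exists_involutive_of_isPerfectMatching {M : G.Subgraph} (hM : M.IsPerfectMatching) :
    ∃ f : V → V, Involutive f ∧ ∀ v w, M.Adj v w ↔ f v = w := by
  choose f hf huniq using Subgraph.isPerfectMatching_iff.1 hM
  exact ⟨f, fun v ↦ (huniq _ _ (hf v).symm).symm,
    fun v w ↦ ⟨fun h ↦ (huniq v w h).symm, fun h ↦ h ▸ hf v⟩⟩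

end Graph

/-- A one-factorization of `G`: a partition of its edges into perfect matchings, indexed by the
colours `ι`. The matching of colour `i` is given by the involution `partner i` that sends each
vertex to the other end of its edge of colour `i`. -/
structure OneFactorization {V : Type*} (G : SimpleGraph V) (ι : Type*) where
  partner : ι → V → V
  involutive (i : ι) : Involutive (partner i)
  injective (v : V) : Injective fun i ↦ partner i v
  adj_iff (v w : V) : G.Adj v w ↔ ∃ i, partner i v = w

namespace OneFactorization

variable {V ι : Type*} {G : SimpleGraph V}

section Existence

/-- The one-factorization of `G` consisting of a perfect matching, given by the involution `f`, and
the matchings of a one-factorization of the rest of `G`. -/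
def cons {H : SimpleGraph V} {d : ℕ} {f : V → V} (hf : Involutive f)
    (hG : ∀ v w, G.Adj v w ↔ f v = w ∨ H.Adj v w) (hH : ∀ v, ¬ H.Adj v (f v))
    (F : OneFactorization H (Fin d)) : OneFactorization G (Fin (d + 1)) where
  partner := Fin.cons f F.partner
  involutive := Fin.cases hf F.involutive
  injective v := by
    have hne (i : Fin d) : f v ≠ F.partner i v := fun h ↦ hH v ((F.adj_iff v _).2 ⟨i, h.symm⟩)
    intro i j
    cases i using Fin.cases <;> cases j using Fin.cases <;>
      simp [hne, (hne _).symm, (F.injective v).eq_iff]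
  adj_iff v w := by simp [hG, F.adj_iff, Fin.exists_fin_succ]

theorem nonempty_of_regular [Finite V] {d : ℕ} (hbip : G.IsBipartite)
    (hG : ∀ v, (G.neighborSet v).ncard = d) : Nonempty (OneFactorization G (Fin d)) := by
  induction d generalizing G with
  | zero =>
    have hempty (v : V) : G.neighborSet v = ∅ := (Set.ncard_eq_zero).1 (hG v)
    exact ⟨⟨Fin.elim0, fun i ↦ i.elim0, fun _ i ↦ i.elim0,
      fun v w ↦ by simp [← mem_neighborSet, hempty]⟩⟩
  | succ d ih =>
    obtain ⟨M, hM⟩ := exists_isPerfectMatching_of_regular hbip d.succ_pos hG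
    obtain ⟨f, hf, hMf⟩ := exists_involutive_of_isPerfectMatching hM
    let H : SimpleGraph V := G \ M.spanningCoe
    have hH (v w : V) : H.Adj v w ↔ G.Adj v w ∧ f v ≠ w := by simp [H, hMf]
    have hGf (v : V) : G.Adj v (f v) := M.adj_sub ((hMf v _).2 rfl)
    have hHreg (v : V) : (H.neighborSet v).ncard = d := by
      have hdiff : H.neighborSet v = G.neighborSet v \ {f v} := by
        ext w
        simp [hH, eq_comm]
      have hmem : f v ∈ G.neighborSet v := hGf v
      rw [hdiff, Set.ncard_sdiff_singleton_of_mem hmem, hG, Nat.add_sub_cancel]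
    obtain ⟨F⟩ := ih (hbip.mono_left sdiff_le) hHreg
    refine ⟨cons hf (fun v w ↦ ?_) (fun v h ↦ ((hH v _).1 h).2 rfl) F⟩
    rw [hH]
    by_cases hw : f v = w
    · simp [← hw, hGf]
    · simp [hw]

end Existence

variable (F : OneFactorization G ι) {i j k : ι}

theorem adj_partner (i : ι) (v : V) : G.Adj v (F.partner i v) := (F.adj_iff _ _).2 ⟨i, rfl⟩

theorem card_lt_card [Fintype V] [Fintype ι] [Nonempty V] (F : OneFactorization G ι) :
    Fintype.card ι < Fintype.card V := by
  let v : V := Classical.arbitrary V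
  refine Fintype.card_lt_of_injective_of_notMem _ (F.injective v) (b := v) ?_
  rintro ⟨i, hi⟩
  exact (F.adj_partner i v).ne hi.symm

/-- The spanning subgraph of `G` formed by the edges of colours `i` and `j`. -/
def pairUnion (i j : ι) : SimpleGraph V where
  Adj v w := F.partner i v = w ∨ F.partner j v = w
  symm := ⟨fun _ _ h ↦ h.imp (fun hi ↦ ((F.involutive i).eq_iff.1 hi).symm)
    fun hj ↦ ((F.involutive j).eq_iff.1 hj).symm⟩
  loopless := ⟨fun v h ↦ h.elim (F.adj_partner i v).ne' (F.adj_partner j v).ne'⟩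

theorem isTwoFactor_pairUnion (hij : i ≠ j) : IsTwoFactor G (F.pairUnion i j) := by
  refine ⟨fun v w h ↦ (F.adj_iff v w).2 (h.elim (⟨i, ·⟩) (⟨j, ·⟩)), fun v ↦ ?_⟩
  have hnbr : (F.pairUnion i j).neighborSet v = {F.partner i v, F.partner j v} := by
    ext w
    simp [pairUnion, eq_comm]
  rw [hnbr, Set.ncard_pair ((F.injective v).ne hij)]

/-- A one-factorization is perfect if any two of its matchings together form a Hamiltonian cycle.
Such a union is always 2-regular, so only connectedness is required. -/
def IsPerfect : Prop := Pairwise fun i j ↦ (F.pairUnion i j).Connected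

theorem isPerfect_of_forall_isTwoFactor_connected (hG : ∀ H, IsTwoFactor G H → H.Connected) :
    F.IsPerfect :=
  fun _ _ hij ↦ hG _ (F.isTwoFactor_pairUnion hij)

variable {F}

theorem IsPerfect.eq_univ_of_mapsTo (hF : F.IsPerfect) (hij : i ≠ j) {Z : Set V}
    (hZ : Z.Nonempty) (hi : Set.MapsTo (F.partner i) Z Z) (hj : Set.MapsTo (F.partner j) Z Z) :
    Z = Set.univ :=
  preconnected_iff_forall_adj_closed_eq_univ.1 (hF hij).preconnected Z hZ
    fun _ hv _ hvw ↦ hvw.elim (· ▸ hi hv) (· ▸ hj hv)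

section Connectivity

section Boundary

variable [Fintype V] [DecidableEq V] {X S : Finset V}

variable (F) in
/-- The vertices outside `X` that are matched into `X` by colour `i`. -/
def boundary (i : ι) (X : Finset V) : Finset V := {v | v ∉ X ∧ F.partner i v ∈ X}

variable (F) in
theorem mapsTo_partner_union_boundary (i : ι) (X : Finset V) :
    Set.MapsTo (F.partner i) ↑(X ∪ F.boundary i X) ↑(X ∪ F.boundary i X) := by
  intro v hv
  simp only [boundary, coe_union, coe_filter_univ, Set.mem_union, mem_coe, Set.mem_ofPred_eq,
    F.involutive i v] at hv ⊢
  tauto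

variable (F) in
theorem even_card_add_card_boundary (i : ι) (X : Finset V) : Even (#X + #(F.boundary i X)) := by
  have hdisj : Disjoint X (F.boundary i X) :=
    disjoint_right.2 fun _ hv ↦ (mem_filter.1 hv).2.1
  rw [← card_union_of_disjoint hdisj]
  exact even_card_of_involutive (F.involutive i) (fun v ↦ (F.adj_partner i v).ne')
    (F.mapsTo_partner_union_boundary i X)

theorem IsPerfect.boundary_ne_boundary (hF : F.IsPerfect) (hij : i ≠ j) (hX : X.Nonempty)
    (hne : X ∪ F.boundary i X ≠ univ) : F.boundary i X ≠ F.boundary j X := by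
  intro heq
  have hj := F.mapsTo_partner_union_boundary j X
  rw [← heq] at hj
  have huniv := hF.eq_univ_of_mapsTo hij (coe_nonempty.2 (hX.mono subset_union_left))
    (F.mapsTo_partner_union_boundary i X) hj
  exact hne (coe_eq_univ.1 huniv)

theorem IsPerfect.union_eq_univ_of_boundary_subset [Fintype ι] (hF : F.IsPerfect)
    (hι : 2 < Fintype.card ι) (hX : X.Nonempty) (hS : #S ≤ 2) (hXS : ∀ i, F.boundary i X ⊆ S) :
    X ∪ S = univ := by
  by_contra hne
  have hdistinct {i j : ι} (hij : i ≠ j) : F.boundary i X ≠ F.boundary j X :=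
    hF.boundary_ne_boundary hij hX fun h ↦
      hne (univ_subset_iff.1 (h.ge.trans (union_subset_union_right (hXS i))))
  have hsymmDiff {i j : ι} (hij : i ≠ j) : F.boundary i X ∆ F.boundary j X = S := by
    have hi := F.even_card_add_card_boundary i X
    have hj := F.even_card_add_card_boundary j X
    rw [Nat.even_add] at hi hj
    exact symmDiff_eq_of_subset_of_card_le_two hS (hXS i) (hXS j) (hdistinct hij) (hi.symm.trans hj)
  obtain ⟨i, j, k, hij, hik, hjk⟩ := Fintype.two_lt_card_iff.1 hι
  exact hdistinct hjk (symmDiff_right_injective _ ((hsymmDiff hij).trans (hsymmDiff hik).symm))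

end Boundary

theorem IsPerfect.preconnected_induce_compl [Finite V] [Fintype ι] (hF : F.IsPerfect)
    (hι : 2 < Fintype.card ι) {S : Finset V} (hS : #S ≤ 2) :
    (G.induce (S : Set V)ᶜ).Preconnected := by
  classical
  have := Fintype.ofFinite V
  refine preconnected_iff_forall_adj_closed_eq_univ.2 fun X hX hclosed ↦ ?_
  have hboundary (i : ι) : F.boundary i (X.toFinset.map (.subtype _)) ⊆ S := by
    intro v hv
    obtain ⟨hvX, hiX⟩ := (mem_filter.1 hv).2
    obtain ⟨u, hu, hui⟩ := mem_map.1 hiX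
    by_contra hvS
    have hadj : (G.induce (S : Set V)ᶜ).Adj u ⟨v, hvS⟩ := by
      rw [induce_adj]
      exact (hui ▸ F.adj_partner i v).symm
    exact hvX (mem_map.2 ⟨_, Set.mem_toFinset.2 (hclosed u (Set.mem_toFinset.1 hu) _ hadj), rfl⟩)
  have huniv := hF.union_eq_univ_of_boundary_subset hι
    (Set.toFinset_nonempty.2 hX).map hS hboundary
  refine Set.eq_univ_of_forall fun v ↦ ?_
  obtain hv | hv := mem_union.1 (huniv.ge (mem_univ v.1))
  · obtain ⟨u, hu, huv⟩ := mem_map.1 hv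
    exact Subtype.ext huv ▸ Set.mem_toFinset.1 hu
  · exact absurd hv v.2

theorem IsPerfect.threeConnected [Fintype V] [Fintype ι] (hF : F.IsPerfect)
    (hι : 2 < Fintype.card ι) : ThreeConnected G := by
  classical
  obtain ⟨i, j, -, hij, -⟩ := Fintype.two_lt_card_iff.1 hι
  have := (hF hij).nonempty
  have hV : 3 < Fintype.card V := lt_of_le_of_lt hι F.card_lt_card
  refine ⟨hV, fun S hS ↦ ?_⟩
  obtain ⟨S, rfl⟩ := S.toFinite.exists_finset_coe
  rw [Set.ncard_coe_finset] at hS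
  obtain ⟨v, hv⟩ := exists_mem_notMem_of_card_lt_card (s := S) (t := univ) (hS.trans hV)
  have : Nonempty ((S : Set V)ᶜ : Set V) := ⟨v, hv.2⟩
  exact ⟨hF.preconnected_induce_compl hι (Nat.le_of_lt_succ hS)⟩

end Connectivity

section Bipartite

variable (F) (C : G.Coloring Bool)

theorem coloring_partner (i : ι) (v : V) : C (F.partner i v) = !C v :=
  Bool.eq_not.2 (C.valid (F.adj_partner i v)).symm

/-- Matching `i` as a bijection between the two colour classes. -/
def classEquiv (i : ι) : {v // C v = true} ≃ {v // C v = false} :=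
  ((F.involutive i).toPerm).subtypeEquiv fun v ↦ by simp [F.coloring_partner C]

/-- The permutation of a colour class that follows first matching `i` and then matching `j`. -/
def classPerm (i j : ι) : Equiv.Perm {v // C v = true} :=
  (F.classEquiv C i).trans (F.classEquiv C j).symm

theorem coe_classPerm (i j : ι) (a : {v // C v = true}) :
    (F.classPerm C i j a : V) = F.partner j (F.partner i a) := rfl

theorem classPerm_trans (i j k : ι) :
    (F.classPerm C i j).trans (F.classPerm C j k) = F.classPerm C i k := by
  ext a
  simp [classPerm]

theorem classPerm_symm (i j : ι) : (F.classPerm C i j).symm = F.classPerm C j i := rfl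

theorem classPerm_apply_ne (hij : i ≠ j) (a : {v // C v = true}) : F.classPerm C i j a ≠ a := by
  intro h
  have hij' : F.partner j (F.partner i a) = a := congrArg Subtype.val h
  exact hij (F.injective a ((F.involutive j).eq_iff.1 hij'))

variable {F}

theorem IsPerfect.sameCycle_classPerm (hF : F.IsPerfect) (hij : i ≠ j)
    (a b : {v // C v = true}) : (F.classPerm C i j).SameCycle a b := by
  let Z : Set V := {v | ∃ c, (F.classPerm C i j).SameCycle a c ∧ (v = c ∨ v = F.partner i c)}
  have hi : Set.MapsTo (F.partner i) Z Z := by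
    rintro _ ⟨c, hc, rfl | rfl⟩
    · exact ⟨c, hc, .inr rfl⟩
    · exact ⟨c, hc, .inl (F.involutive i c)⟩
  have hj : Set.MapsTo (F.partner j) Z Z := by
    rintro _ ⟨c, hc, rfl | rfl⟩
    · refine ⟨(F.classPerm C i j).symm c, Equiv.Perm.sameCycle_symm_apply_right.2 hc, .inr ?_⟩
      rw [classPerm_symm, coe_classPerm, F.involutive i]
    · exact ⟨F.classPerm C i j c, Equiv.Perm.sameCycle_apply_right.2 hc, .inl rfl⟩
  have hZ : Z = Set.univ := hF.eq_univ_of_mapsTo hij ⟨a, a, .refl _ _, .inl rfl⟩ hi hj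
  obtain ⟨c, hc, hbc | hbc⟩ := hZ.ge (Set.mem_univ b.1)
  · exact Subtype.ext hbc ▸ hc
  · have hcolor := F.coloring_partner C i c
    rw [← hbc, b.2, c.2] at hcolor
    exact absurd hcolor (by decide)

variable [Fintype V]

theorem IsPerfect.sign_classPerm [DecidableEq V] [Nonempty {v // C v = true}]
    (hF : F.IsPerfect) (hij : i ≠ j) :
    Equiv.Perm.sign (F.classPerm C i j) = -(-1) ^ Fintype.card {v // C v = true} := by
  let a : {v // C v = true} := Classical.arbitrary _
  have hcycle : (F.classPerm C i j).IsCycle :=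
    ⟨a, F.classPerm_apply_ne C hij a, fun b _ ↦ hF.sameCycle_classPerm C hij a b⟩
  have hsupport : (F.classPerm C i j).support = univ :=
    eq_univ_of_forall fun b ↦ Equiv.Perm.mem_support.2 (F.classPerm_apply_ne C hij b)
  rw [hcycle.sign, hsupport, card_univ]

theorem IsPerfect.odd_card_colorClass [Fintype ι] [Nonempty {v // C v = true}] (hF : F.IsPerfect)
    (hι : 2 < Fintype.card ι) : Odd (Fintype.card {v // C v = true}) := by
  classical
  obtain ⟨i, j, k, hij, hik, hjk⟩ := Fintype.two_lt_card_iff.1 hι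
  have hsign := congrArg Equiv.Perm.sign (F.classPerm_trans C i j k)
  rw [Equiv.Perm.sign_trans, hF.sign_classPerm C hij, hF.sign_classPerm C hjk,
    hF.sign_classPerm C hik, mul_eq_left] at hsign
  by_contra hodd
  rw [(Nat.not_odd_iff_even.1 hodd).neg_one_pow] at hsign
  exact absurd hsign (by decide)

theorem card_eq_two_mul_card_colorClass (F : OneFactorization G ι) (i : ι) :
    Fintype.card V = 2 * Fintype.card {v // C v = true} := by
  have hsum := Fintype.card_subtype_compl fun v ↦ C v = true
  have hle := Fintype.card_subtype_le fun v ↦ C v = true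
  have hclass := Fintype.card_congr (F.classEquiv C i)
  simp only [Bool.not_eq_true] at hsum
  omega

theorem IsPerfect.card_mod_four [Fintype ι] (hF : F.IsPerfect) (hbip : G.IsBipartite)
    (hι : 2 < Fintype.card ι) : Fintype.card V % 4 = 2 := by
  let C : G.Coloring Bool := hbip.toColoring (by simp)
  obtain ⟨i, j, -, hij, -⟩ := Fintype.two_lt_card_iff.1 hι
  have := (hF hij).nonempty
  have hcard := F.card_eq_two_mul_card_colorClass C i
  have hpos : 0 < Fintype.card V := Fintype.card_pos
  have : Nonempty {v // C v = true} := Fintype.card_pos_iff.1 (by omega)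
  obtain ⟨n, hn⟩ := hF.odd_card_colorClass C hι
  omega

end Bipartite

end OneFactorization

/-- a 2-factor Hamiltonian cubic bipartite graph is 3-connected and its
number of vertices is congruent to 2 modulo 4. -/
theorem stmt_2 {V : Type*} [Fintype V] (G : SimpleGraph V)
    (hcubic : ∀ v : V, (G.neighborSet v).ncard = 3)
    (hbip : G.Colorable 2)
    (h2fh : TwoFactorHamiltonian G) :
    ThreeConnected G ∧ Fintype.card V % 4 = 2 := by
  obtain ⟨F⟩ := OneFactorization.nonempty_of_regular hbip hcubic
  have hF : F.IsPerfect := F.isPerfect_of_forall_isTwoFactor_connected h2fh.2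
  have hthree : 2 < Fintype.card (Fin 3) := by simp
  exact ⟨hF.threeConnected hthree, hF.card_mod_four hbip hthree⟩
end
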